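/- For every finite lattice L, nk(L) is at most the number of strictly join irreducible elements of L. -/

import Mathlib

/-!
In a c-independent list each `ℓ j` may be replaced by any smaller element that is still not below
`m j`, without changing the witness. If `S` is join-dense, such an element can be found in `S`, and
a c-independent list never repeats an entry, so its length is at most the size of `S`. The strictly
join irreducible elements are join-dense in every lattice without infinite descending chains,
because an element minimal among those not below `y` is strictly join irreducible.
-/

/-- A list `ℓ 0, …, ℓ (k-1)` of elements of a poset is c-independent with witness
`m 0, …, m (k-1)`: `ℓ j ≰ m j` for all `j`, and `ℓ i ≤ m j` whenever `i < j`. -/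
def CIndepList {P : Type*} [PartialOrder P] {k : ℕ} (ℓ m : Fin k → P) : Prop :=
  (∀ j, ¬ ℓ j ≤ m j) ∧ ∀ i j : Fin k, i < j → ℓ i ≤ m j

/-- The c-rank of a poset: the maximum cardinality of a c-independent subset,
i.e. the largest `k` admitting an injective c-independent list of length `k`. -/
noncomputable def crank (P : Type*) [PartialOrder P] : ℕ :=
  sSup {k | ∃ ℓ m : Fin k → P, Function.Injective ℓ ∧ CIndepList ℓ m}

/-- An element `ℓ` of a lattice is strictly join irreducible if whenever `ℓ` is the
join of a nonempty (finite) subset `X`, `ℓ` itself belongs to `X`. -/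
def StrictJoinIrred {L : Type*} [Lattice L] (ℓ : L) : Prop :=
  ∀ (X : Finset L) (hX : X.Nonempty), ℓ = X.sup' hX id → ℓ ∈ X

/-- A subset `S` of a poset is join-dense if every element is the join of the elements of `S`
below it, expressed by `IsLUB` since `P` need not have joins, and used to bound the c-rank. -/
def JoinDense {P : Type*} [PartialOrder P] (S : Set P) : Prop :=
  ∀ x, IsLUB (S ∩ Set.Iic x) x

section PartialOrder

variable {P : Type*} [PartialOrder P] {S : Set P}

theorem JoinDense.exists_mem_le_not_le (hS : JoinDense S) {x y : P} (hxy : ¬ x ≤ y) :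
    ∃ s ∈ S, s ≤ x ∧ ¬ s ≤ y := by
  contrapose! hxy
  exact (hS x).2 fun s hs => hxy s hs.1 hs.2

variable {k : ℕ} {ℓ m : Fin k → P}

theorem CIndepList.injective (h : CIndepList ℓ m) : Function.Injective ℓ :=
  .of_lt_imp_ne fun i j hij hℓ => h.1 j (hℓ ▸ h.2 i j hij)

theorem CIndepList.mono_left {s : Fin k → P} (h : CIndepList ℓ m) (hsℓ : s ≤ ℓ)
    (hsm : ∀ j, ¬ s j ≤ m j) : CIndepList s m :=
  ⟨hsm, fun i j hij => (hsℓ i).trans (h.2 i j hij)⟩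

theorem CIndepList.exists_forall_mem_of_joinDense (h : CIndepList ℓ m) (hS : JoinDense S) :
    ∃ s : Fin k → P, (∀ j, s j ∈ S) ∧ CIndepList s m := by
  choose s hs hsℓ hsm using fun j => hS.exists_mem_le_not_le (h.1 j)
  exact ⟨s, hs, h.mono_left hsℓ hsm⟩

theorem CIndepList.le_ncard_of_forall_mem (h : CIndepList ℓ m) (hS : S.Finite)
    (hℓ : ∀ j, ℓ j ∈ S) : k ≤ S.ncard := by
  calc
    k = (Set.range ℓ).ncard := by rw [Set.ncard_range_of_injective h.injective, Nat.card_fin]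
    _ ≤ S.ncard := Set.ncard_le_ncard (Set.range_subset_iff.2 hℓ) hS

theorem crank_le_ncard_of_joinDense (hfin : S.Finite) (hS : JoinDense S) :
    crank P ≤ S.ncard := by
  apply csSup_le'
  rintro k ⟨ℓ, m, -, h⟩
  obtain ⟨s, hsS, hs⟩ := h.exists_forall_mem_of_joinDense hS
  exact hs.le_ncard_of_forall_mem hfin hsS

end PartialOrder

section Lattice

variable {L : Type*} [Lattice L]

theorem strictJoinIrred_of_minimal_not_le {s y : L} (hs : Minimal (fun z => ¬ z ≤ y) s) :
    StrictJoinIrred s := by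
  intro X hX hsX
  obtain ⟨z, hzX, hzy⟩ : ∃ z ∈ X, ¬ z ≤ y := by
    simpa [hsX, Finset.sup'_le_iff] using hs.prop
  have hzs : z ≤ s := hsX ▸ Finset.le_sup' id hzX
  rwa [← hs.eq_of_le hzy hzs]

theorem joinDense_setOf_strictJoinIrred [WellFoundedLT L] :
    JoinDense {ℓ : L | StrictJoinIrred ℓ} := by
  refine fun x => ⟨fun s hs => hs.2, fun y hy => ?_⟩
  by_contra hxy
  obtain ⟨s, hsx, hs⟩ := exists_minimal_le_of_wellFoundedLT (fun z => ¬ z ≤ y) x hxy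
  exact hs.prop (hy ⟨strictJoinIrred_of_minimal_not_le hs, hsx⟩)

end Lattice

/-- For every finite lattice `L`, the c-rank of `L` is at most the number of
strictly join irreducible elements of `L`. -/
theorem crank_le_card_sji (L : Type*) [Lattice L] [Fintype L] :
    crank L ≤ {ℓ : L | StrictJoinIrred ℓ}.ncard :=
  crank_le_ncard_of_joinDense (Set.toFinite _) joinDense_setOf_strictJoinIrred
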